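/- arXiv:2109.01315 — 9 statements merged into one kernel-verified Lean document; each statement's English description precedes it below -/
import Mathlib

section
/- Let A be a densely defined closed operator on a complex Hilbert space H with closed range. Then R(A) = R(A*) if and only if N(A) = N(A*). -/
/-
Since `D(A)` is dense, the graph of `A*` is the adjoint of the graph of `A` as a linear relation,
so only relations matter. For a linear relation `g` the identity `N(g*) = R(g)ᗮ` is immediate from
the definition of the adjoint. If `g` and `R(g)` are closed then also `R(g*) = N(g)ᗮ`: for
`z ⟂ N(g)` the functional `(a, b) ↦ ⟪z, a⟫` on `g` vanishes wherever `b = 0`, so by the open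
mapping theorem it is a continuous functional of `b ∈ R(g)`, and a Riesz representative `y` of it
satisfies `(y, z) ∈ g*`. Hence `R(g) = R(g*)` and `N(g) = N(g*)` read `R(g) = N(g)ᗮ` and
`N(g) = R(g)ᗮ`, which are equivalent because `R(g)` and `N(g)` are closed.
-/

open scoped InnerProductSpace
open LinearPMap

noncomputable section

variable {H : Type*} [NormedAddCommGroup H] [InnerProductSpace ℂ H] [CompleteSpace H]

/-- The range `R(A)` of a partially defined operator, as a submodule of `H`. -/
def LinearPMap.ran (A : H →ₗ.[ℂ] H) : Submodule ℂ H :=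
  LinearMap.range A.toFun

/-- The null space `N(A)` of a partially defined operator, as a submodule of `H`. -/
def LinearPMap.nul (A : H →ₗ.[ℂ] H) : Submodule ℂ H :=
  (LinearMap.ker A.toFun).map A.domain.subtype

section LiftAlongQuotient

variable {R M N P : Type*} [Ring R] [TopologicalSpace M] [AddCommGroup M] [Module R M]
  [TopologicalSpace N] [AddCommGroup N] [Module R N]
  [TopologicalSpace P] [AddCommGroup P] [Module R P]

theorem exists_continuousLinearMap_comp_eq_of_ker_le {T : M →L[R] N} {φ : M →L[R] P}
    (hT : Topology.IsQuotientMap T) (hker : T.ker ≤ φ.ker) : ∃ ψ : N →L[R] P, ψ ∘L T = φ := by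
  let ψ : N →ₗ[R] P := T.ker.liftQ φ.toLinearMap hker ∘ₗ
    (T.toLinearMap.quotKerEquivOfSurjective hT.surjective).symm.toLinearMap
  have hψ (x : M) : ψ (T x) = φ x := by
    have hx : (T.toLinearMap.quotKerEquivOfSurjective hT.surjective).symm (T x) =
        Submodule.Quotient.mk x := (LinearEquiv.symm_apply_eq _).2 rfl
    simp only [ψ, LinearMap.comp_apply, LinearEquiv.coe_coe, hx, Submodule.liftQ_apply,
      ContinuousLinearMap.coe_coe]
  have hψ_cont : Continuous ψ := hT.continuous_iff.2 (φ.continuous.congr fun x ↦ (hψ x).symm)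
  exact ⟨⟨ψ, hψ_cont⟩, ContinuousLinearMap.ext hψ⟩

end LiftAlongQuotient

section LinearRelation

variable {R M N : Type*} [Semiring R] [AddCommMonoid M] [Module R M] [AddCommMonoid N] [Module R N]

/-- The range `R(g)` of a linear relation, encoded as a submodule `g` of `M × N`; for the graph of
an operator it is the range of the operator. -/
def relationRange (g : Submodule R (M × N)) : Submodule R N :=
  g.map (LinearMap.snd R M N)

/-- The null space `N(g)` of a linear relation, encoded as a submodule `g` of `M × N`; for the graph
of an operator it is the null space of the operator. -/
def relationKernel (g : Submodule R (M × N)) : Submodule R M :=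
  g.comap (LinearMap.inl R M N)

theorem mem_relationRange {g : Submodule R (M × N)} {b : N} :
    b ∈ relationRange g ↔ ∃ a, (a, b) ∈ g := by
  simp [relationRange]

theorem mem_relationKernel {g : Submodule R (M × N)} {a : M} :
    a ∈ relationKernel g ↔ (a, 0) ∈ g :=
  Iff.rfl

theorem isClosed_relationKernel [TopologicalSpace M] [TopologicalSpace N]
    {g : Submodule R (M × N)} (hg : IsClosed (g : Set (M × N))) :
    IsClosed (relationKernel g : Set M) :=
  hg.preimage (Continuous.prodMk_left 0)

end LinearRelation

section OperatorGraph

variable {V : Type*} [NormedAddCommGroup V] [InnerProductSpace ℂ V]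

theorem relationRange_graph (A : V →ₗ.[ℂ] V) : relationRange A.graph = A.ran :=
  A.graph_map_snd_eq_range

theorem relationKernel_graph (A : V →ₗ.[ℂ] V) : relationKernel A.graph = A.nul := by
  ext x
  simp [mem_relationKernel, LinearPMap.nul]

end OperatorGraph

section Banach

variable {𝕜 E F G : Type*} [NontriviallyNormedField 𝕜]
  [NormedAddCommGroup E] [NormedSpace 𝕜 E] [CompleteSpace E]
  [NormedAddCommGroup F] [NormedSpace 𝕜 F] [CompleteSpace F]
  [TopologicalSpace G] [AddCommGroup G] [Module 𝕜 G]

theorem exists_continuousLinearMap_relationRange_of_relationKernel_le_ker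
    {g : Submodule 𝕜 (E × F)} (hg : IsClosed (g : Set (E × F)))
    (hr : IsClosed (relationRange g : Set F)) {f : E →L[𝕜] G} (hf : relationKernel g ≤ f.ker) :
    ∃ ψ : relationRange g →L[𝕜] G,
      ∀ a b, ∀ hab : (a, b) ∈ g, ψ ⟨b, mem_relationRange.2 ⟨a, hab⟩⟩ = f a := by
  have : CompleteSpace g := hg.completeSpace_coe
  have : CompleteSpace (relationRange g) := hr.completeSpace_coe
  let T : g →L[𝕜] relationRange g := (ContinuousLinearMap.snd 𝕜 E F ∘L g.subtypeL).codRestrict _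
    fun x ↦ mem_relationRange.2 ⟨x.1.1, x.2⟩
  let φ : g →L[𝕜] G := f ∘L ContinuousLinearMap.fst 𝕜 E F ∘L g.subtypeL
  have hT : Function.Surjective T := by
    rintro ⟨b, hb⟩
    obtain ⟨a, hab⟩ := mem_relationRange.1 hb
    exact ⟨⟨(a, b), hab⟩, rfl⟩
  have hker : T.ker ≤ φ.ker := by
    rintro ⟨⟨a, b⟩, hab⟩ hb
    obtain rfl : b = 0 := congrArg Subtype.val hb
    exact hf hab
  obtain ⟨ψ, hψ⟩ := exists_continuousLinearMap_comp_eq_of_ker_le (T.isQuotientMap hT) hker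
  exact ⟨ψ, fun a b hab ↦ DFunLike.congr_fun hψ ⟨(a, b), hab⟩⟩

end Banach

section Hilbert

variable {𝕜 E F : Type*} [RCLike 𝕜] [NormedAddCommGroup E] [InnerProductSpace 𝕜 E]
  [NormedAddCommGroup F] [InnerProductSpace 𝕜 F]

theorem relationKernel_adjoint (g : Submodule 𝕜 (E × F)) :
    relationKernel g.adjoint = (relationRange g)ᗮ := by
  ext y
  simp only [mem_relationKernel, Submodule.mem_adjoint_iff, inner_zero_right, sub_zero,
    Submodule.mem_orthogonal, mem_relationRange, forall_exists_index]
  exact forall_comm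

theorem relationRange_adjoint_le (g : Submodule 𝕜 (E × F)) :
    relationRange g.adjoint ≤ (relationKernel g)ᗮ := by
  intro z hz a ha
  obtain ⟨y, hyz⟩ := mem_relationRange.1 hz
  simpa using (Submodule.mem_adjoint_iff g (y, z)).1 hyz a 0 ha

variable [CompleteSpace E] [CompleteSpace F]

theorem relationRange_adjoint {g : Submodule 𝕜 (E × F)} (hg : IsClosed (g : Set (E × F)))
    (hr : IsClosed (relationRange g : Set F)) :
    relationRange g.adjoint = (relationKernel g)ᗮ := by
  refine (relationRange_adjoint_le g).antisymm fun z hz ↦ ?_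
  have : CompleteSpace (relationRange g) := hr.completeSpace_coe
  have hker : relationKernel g ≤ (innerSL 𝕜 z).ker := (Submodule.mem_orthogonal' _ z).1 hz
  obtain ⟨ψ, hψ⟩ := exists_continuousLinearMap_relationRange_of_relationKernel_le_ker hg hr hker
  let y : relationRange g := (InnerProductSpace.toDual 𝕜 (relationRange g)).symm ψ
  have hy (a : E) (b : F) (hab : (a, b) ∈ g) : ⟪(y : F), b⟫_𝕜 = ⟪z, a⟫_𝕜 :=
    InnerProductSpace.toDual_symm_apply.trans (hψ a b hab)
  refine mem_relationRange.2 ⟨y, (Submodule.mem_adjoint_iff g _).2 fun a b hab ↦ ?_⟩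
  rw [← inner_conj_symm, hy a b hab, inner_conj_symm, sub_self]

theorem stmt0_general {g : Submodule 𝕜 (E × E)} (hg : IsClosed (g : Set (E × E)))
    (hr : IsClosed (relationRange g : Set E)) :
    relationRange g = relationRange g.adjoint ↔ relationKernel g = relationKernel g.adjoint := by
  have : CompleteSpace (relationRange g) := hr.completeSpace_coe
  have : CompleteSpace (relationKernel g) := (isClosed_relationKernel hg).completeSpace_coe
  rw [relationRange_adjoint hg hr, relationKernel_adjoint]
  constructor <;> intro h <;> rw [h, Submodule.orthogonal_orthogonal]

end Hilbert

/-- Let `A` be a densely defined closed operator on a complex Hilbert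
space `H` with closed range. Then `R(A) = R(A*)` if and only if `N(A) = N(A*)`. -/
theorem stmt0 (A : H →ₗ.[ℂ] H) (hd : Dense (A.domain : Set H)) (hc : A.IsClosed)
    (hr : IsClosed (A.ran : Set H)) :
    A.ran = A.adjoint.ran ↔ A.nul = A.adjoint.nul := by
  simp only [← relationRange_graph, ← relationKernel_graph, adjoint_graph_eq_graph_adjoint hd]
    at hr ⊢
  exact stmt0_general hc hr
end
end

section
/- Let A be a densely defined closed operator on a complex Hilbert space H with closed range. Then R(A) = R(A*) if and only if the closure of the carrier C(A) = D(A) ∩ N(A)⊥ equals R(A). -/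
open scoped InnerProductSpace
open LinearPMap

noncomputable section

variable {H : Type*} [NormedAddCommGroup H] [InnerProductSpace ℂ H] [CompleteSpace H]

/-!
Both sides are statements about `N(A)ᗮ`. The orthogonal projection onto `N(A)ᗮ` maps `D(A)` into
itself, because it only subtracts elements of `N(A) ⊆ D(A)`; hence it carries the dense subspace
`D(A)` onto a dense subspace of `N(A)ᗮ`, and `C(A)` is dense in `N(A)ᗮ`. On the other hand
`R(A*) = N(A)ᗮ`, which is the closed range theorem: for `w ∈ N(A)ᗮ` the functional `A x ↦ ⟪w, x⟫` on
`R(A)` is well defined, and it is bounded because the projection from the graph of `A` onto `R(A)`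
is open; the vector of `R(A)` representing it is mapped to `w` by `A*`.
-/

section NullSpace

variable {R E F : Type*} [Ring R] [AddCommGroup E] [Module R E] [AddCommGroup F] [Module R F]

/-- The null space of a partially defined operator between arbitrary modules, as a submodule of the
whole space rather than of the domain. For endomorphisms of a complex Hilbert space it is
definitionally `LinearPMap.nul`. -/
def nullSpace (A : E →ₗ.[R] F) : Submodule R E :=
  A.toFun.ker.map A.domain.subtype

theorem nullSpace_le_domain (A : E →ₗ.[R] F) : nullSpace A ≤ A.domain :=
  Submodule.map_subtype_le _ _

theorem mem_nullSpace_iff_mem_graph {A : E →ₗ.[R] F} {x : E} :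
    x ∈ nullSpace A ↔ (x, (0 : F)) ∈ A.graph := by
  simp only [nullSpace, Submodule.mem_map, LinearMap.mem_ker, LinearPMap.mem_graph_iff,
    Submodule.subtype_apply, and_comm, LinearPMap.toFun_eq_coe]

theorem isClosed_nullSpace {R E F : Type*} [CommRing R]
    [AddCommGroup E] [Module R E] [TopologicalSpace E]
    [AddCommGroup F] [Module R F] [TopologicalSpace F] {A : E →ₗ.[R] F} (hA : A.IsClosed) :
    IsClosed (nullSpace A : Set E) := by
  have preimage_graph : (nullSpace A : Set E) = (fun x => (x, (0 : F))) ⁻¹' A.graph :=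
    Set.ext fun _ => mem_nullSpace_iff_mem_graph
  rw [preimage_graph]
  exact IsClosed.preimage (by fun_prop) hA

end NullSpace

theorem exists_comp_eq_of_isQuotientMap {R M N P : Type*} [Ring R]
    [AddCommGroup M] [Module R M] [TopologicalSpace M]
    [AddCommGroup N] [Module R N] [TopologicalSpace N]
    [AddCommGroup P] [Module R P] [TopologicalSpace P]
    {T : M →L[R] N} (hT : Topology.IsQuotientMap T) {f : M →L[R] P} (hf : T.ker ≤ f.ker) :
    ∃ g : N →L[R] P, g.comp T = f := by
  let g : N →ₗ[R] P :=
    T.ker.liftQ f.toLinearMap hf ∘ₗ (T.toLinearMap.quotKerEquivOfSurjective hT.surjective).symm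
  have g_apply (x : M) : g (T x) = f x := by
    have symm_apply : (T.toLinearMap.quotKerEquivOfSurjective hT.surjective).symm (T x) =
        T.ker.mkQ x := (LinearEquiv.symm_apply_eq _).2 rfl
    simp only [g, LinearMap.comp_apply, LinearEquiv.coe_coe, symm_apply, Submodule.mkQ_apply,
      Submodule.liftQ_apply, ContinuousLinearMap.coe_coe]
  have g_continuous : Continuous g :=
    hT.continuous_iff.2 (f.continuous.congr fun x => (g_apply x).symm)
  exact ⟨⟨g, g_continuous⟩, ContinuousLinearMap.ext g_apply⟩

section GraphToRange

variable {R E F : Type*} [Ring R]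
  [AddCommGroup E] [Module R E] [TopologicalSpace E]
  [AddCommGroup F] [Module R F] [TopologicalSpace F]

/-- The projection `(x, A x) ↦ A x` from the graph of `A` onto the range of `A`. On the graph an
unbounded operator becomes continuous, which makes the open mapping theorem applicable. -/
def graphToRange (A : E →ₗ.[R] F) : A.graph →L[R] A.toFun.range :=
  ((ContinuousLinearMap.snd R E F).comp A.graph.subtypeL).codRestrict A.toFun.range fun p =>
    A.graph_map_snd_eq_range ▸ Submodule.mem_map_of_mem p.2

theorem graphToRange_surjective (A : E →ₗ.[R] F) : Function.Surjective (graphToRange A) := by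
  rintro ⟨_, x, rfl⟩
  exact ⟨⟨(x, A x), A.mem_graph x⟩, rfl⟩

end GraphToRange

section ClosedOperator

variable {𝕜 E F G : Type*} [NontriviallyNormedField 𝕜]
  [NormedAddCommGroup E] [NormedSpace 𝕜 E] [CompleteSpace E]
  [NormedAddCommGroup F] [NormedSpace 𝕜 F] [CompleteSpace F]

theorem isQuotientMap_graphToRange {A : E →ₗ.[𝕜] F} (hA : A.IsClosed)
    (hr : IsClosed (A.toFun.range : Set F)) : Topology.IsQuotientMap (graphToRange A) := by
  have : CompleteSpace A.graph := hA.completeSpace_coe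
  have : CompleteSpace A.toFun.range := hr.completeSpace_coe
  exact (graphToRange A).isQuotientMap (graphToRange_surjective A)

theorem exists_continuousLinearMap_range_apply_eq [AddCommGroup G] [Module 𝕜 G] [TopologicalSpace G]
    {A : E →ₗ.[𝕜] F} (hA : A.IsClosed) (hr : IsClosed (A.toFun.range : Set F)) {f : E →L[𝕜] G}
    (hf : nullSpace A ≤ f.ker) :
    ∃ g : A.toFun.range →L[𝕜] G, ∀ x : A.domain, g (A.toFun.rangeRestrict x) = f x := by
  let graphFst : A.graph →L[𝕜] E := (ContinuousLinearMap.fst 𝕜 E F).comp A.graph.subtypeL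
  have ker_le_ker : (graphToRange A).ker ≤ (f.comp graphFst).ker := by
    rintro ⟨⟨x, y⟩, mem_graph⟩ mem_ker
    obtain rfl : y = 0 := congrArg Subtype.val mem_ker
    exact hf (mem_nullSpace_iff_mem_graph.2 mem_graph)
  obtain ⟨g, hg⟩ := exists_comp_eq_of_isQuotientMap (isQuotientMap_graphToRange hA hr) ker_le_ker
  exact ⟨g, fun x => DFunLike.congr_fun hg ⟨(x, A x), A.mem_graph x⟩⟩

end ClosedOperator

section Carrier

variable {𝕜 E F : Type*} [RCLike 𝕜] [NormedAddCommGroup E] [InnerProductSpace 𝕜 E]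

theorem topologicalClosure_inf_orthogonal_of_le {K D : Submodule 𝕜 E} [K.HasOrthogonalProjection]
    (hKD : K ≤ D) : (D ⊓ Kᗮ).topologicalClosure = D.topologicalClosure ⊓ Kᗮ := by
  apply le_antisymm
  · exact le_inf (Submodule.topologicalClosure_mono inf_le_left)
      (Submodule.topologicalClosure_minimal _ inf_le_right K.isClosed_orthogonal)
  · rintro z ⟨hzD, hzK⟩
    have mapsTo : Set.MapsTo (fun d => d - K.starProjection d) D (D ⊓ Kᗮ : Submodule 𝕜 E) :=
      fun d hd => ⟨D.sub_mem hd (hKD (K.starProjection_apply_mem d)),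
        K.sub_starProjection_mem_orthogonal d⟩
    have sub_mem_closure := map_mem_closure (by fun_prop) hzD mapsTo
    rwa [K.starProjection_apply_eq_zero_iff.2 hzK, sub_zero] at sub_mem_closure

variable [AddCommGroup F] [Module 𝕜 F]

/-- The carrier `C(A) = D(A) ∩ N(A)ᗮ` of a partially defined operator, as a submodule of the whole
space. -/
def carrierSpace (A : E →ₗ.[𝕜] F) : Submodule 𝕜 E :=
  A.domain ⊓ (nullSpace A)ᗮ

theorem topologicalClosure_carrierSpace [CompleteSpace E] [TopologicalSpace F] {A : E →ₗ.[𝕜] F}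
    (hd : Dense (A.domain : Set E)) (hA : A.IsClosed) :
    (carrierSpace A).topologicalClosure = (nullSpace A)ᗮ := by
  have : CompleteSpace (nullSpace A) := (isClosed_nullSpace hA).completeSpace_coe
  rw [carrierSpace, topologicalClosure_inf_orthogonal_of_le (nullSpace_le_domain A),
    Submodule.dense_iff_topologicalClosure_eq_top.1 hd, top_inf_eq]

end Carrier

section ClosedRange

variable {𝕜 E F : Type*} [RCLike 𝕜]
  [NormedAddCommGroup E] [InnerProductSpace 𝕜 E] [CompleteSpace E]
  [NormedAddCommGroup F] [InnerProductSpace 𝕜 F] {A : E →ₗ.[𝕜] F}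

theorem mem_range_adjoint_iff (hd : Dense (A.domain : Set E)) {w : E} :
    w ∈ A†.toFun.range ↔ ∃ y : F, ∀ x : A.domain, ⟪w, x⟫_𝕜 = ⟪y, A x⟫_𝕜 := by
  constructor
  · rintro ⟨y, rfl⟩
    exact ⟨y, A.adjoint_isFormalAdjoint hd y⟩
  · rintro ⟨y, hy⟩
    exact ⟨⟨y, A.mem_adjoint_domain_of_exists y ⟨w, hy⟩⟩, A.adjoint_apply_eq hd _ hy⟩

theorem range_adjoint_le_orthogonal_nullSpace (hd : Dense (A.domain : Set E)) :
    A†.toFun.range ≤ (nullSpace A)ᗮ := by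
  intro w hw
  obtain ⟨y, hy⟩ := (mem_range_adjoint_iff hd).1 hw
  rw [Submodule.mem_orthogonal']
  rintro _ ⟨x, hx, rfl⟩
  have Ax_eq_zero : A x = 0 := hx
  exact (hy x).trans (by rw [Ax_eq_zero, inner_zero_right])

theorem range_adjoint_eq_orthogonal_nullSpace [CompleteSpace F] (hd : Dense (A.domain : Set E))
    (hA : A.IsClosed) (hr : IsClosed (A.toFun.range : Set F)) :
    A†.toFun.range = (nullSpace A)ᗮ := by
  refine (range_adjoint_le_orthogonal_nullSpace hd).antisymm fun w hw => ?_
  have : CompleteSpace A.toFun.range := hr.completeSpace_coe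
  have nullSpace_le_ker : nullSpace A ≤ (innerSL 𝕜 w).ker := fun x hx =>
    Submodule.inner_left_of_mem_orthogonal hx hw
  obtain ⟨g, hg⟩ := exists_continuousLinearMap_range_apply_eq hA hr nullSpace_le_ker
  let y : A.toFun.range := (InnerProductSpace.toDual 𝕜 A.toFun.range).symm g
  refine (mem_range_adjoint_iff hd).2 ⟨y, fun x => ?_⟩
  calc
    ⟪w, x⟫_𝕜 = g (A.toFun.rangeRestrict x) := (hg x).symm
    _ = ⟪y, A.toFun.rangeRestrict x⟫_𝕜 := InnerProductSpace.toDual_symm_apply.symm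
    _ = ⟪(y : F), A x⟫_𝕜 := rfl

theorem stmt2_general {A : E →ₗ.[𝕜] E} (hd : Dense (A.domain : Set E)) (hA : A.IsClosed)
    (hr : IsClosed (A.toFun.range : Set E)) :
    A.toFun.range = A†.toFun.range ↔ (carrierSpace A).topologicalClosure = A.toFun.range := by
  rw [range_adjoint_eq_orthogonal_nullSpace hd hA hr, topologicalClosure_carrierSpace hd hA]
  exact eq_comm

end ClosedRange

/-- Let `A` be a densely defined closed operator on a complex Hilbert
space `H` with closed range. Then `R(A) = R(A*)` if and only if the closure of the
carrier `C(A) = D(A) ⊓ N(A)ᗮ` equals `R(A)`. -/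
theorem stmt2 (A : H →ₗ.[ℂ] H) (hd : Dense (A.domain : Set H)) (hc : A.IsClosed)
    (hr : IsClosed (A.ran : Set H)) :
    A.ran = A.adjoint.ran ↔ (A.domain ⊓ A.nulᗮ).topologicalClosure = A.ran := by
  exact stmt2_general hd hc hr
end
end

section
/- Let A be a densely defined closed operator on a complex Hilbert space H with closed range, and let B be the Moore–Penrose inverse of A. Then R(A) = R(A*) if and only if A(Bx) = B(Ax) for every x ∈ D(A). -/
open scoped InnerProductSpace
open LinearPMap

noncomputable section

variable {H : Type*} [NormedAddCommGroup H] [InnerProductSpace ℂ H] [CompleteSpace H]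

/-- `B : H →L[ℂ] H` is the Moore–Penrose inverse of the densely defined closed
operator `A` with closed range: for every `y ∈ H`, `B y ∈ D(A)`, `B y ⟂ N(A)`,
`A (B y) = Q y` where `Q` is the orthogonal projection onto `R(A)` (expressed as
`y - A (B y) ∈ R(A)ᗮ`), and `B (A x) = P x` where `P` is the orthogonal projection
onto `N(A)ᗮ` (expressed as `x - B (A x) ∈ (N(A)ᗮ)ᗮ`, while `B (A x) ∈ N(A)ᗮ` is part
of the second condition). -/
def IsMPInv (A : H →ₗ.[ℂ] H) (B : H →L[ℂ] H) : Prop :=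
  (∀ y : H, B y ∈ A.domain) ∧
  (∀ y : H, B y ∈ A.nulᗮ) ∧
  (∀ (y : H) (hy : B y ∈ A.domain), y - A ⟨B y, hy⟩ ∈ A.ranᗮ) ∧
  (∀ x : A.domain, (x : H) - B (A x) ∈ A.nulᗮᗮ)

/-!
`A ∘ B` is the orthogonal projection onto `R(A)`, and `B ∘ A` is the restriction to `D(A)` of the
orthogonal projection onto `N(A)ᗮ = R(A*)`. Two orthogonal projections are bounded, so they agree
as soon as they agree on the dense subspace `D(A)`, and they agree iff their ranges do.
-/

theorem eq_iff_starProjection_eq_of_dense {𝕜 E : Type*} [RCLike 𝕜] [NormedAddCommGroup E]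
    [InnerProductSpace 𝕜 E] {D U V : Submodule 𝕜 E} [U.HasOrthogonalProjection]
    [V.HasOrthogonalProjection] (hD : Dense (D : Set E)) :
    U = V ↔ ∀ x : D, U.starProjection (x : E) = V.starProjection (x : E) := by
  rw [← Submodule.starProjection_inj]
  refine ⟨fun h x => by rw [h], fun h => ContinuousLinearMap.ext_on ?_ fun x hx => h ⟨x, hx⟩⟩
  rwa [Submodule.span_eq]

variable {A : H →ₗ.[ℂ] H} {B : H →L[ℂ] H}

theorem mem_ran_adjoint_iff (hd : Dense (A.domain : Set H)) {w : H} :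
    w ∈ A†.ran ↔ ∃ y : H, ∀ x : A.domain, ⟪w, (x : H)⟫_ℂ = ⟪y, A x⟫_ℂ := by
  constructor
  · rintro ⟨y, rfl⟩
    exact ⟨y, adjoint_isFormalAdjoint hd y⟩
  · rintro ⟨y, h⟩
    exact ⟨⟨y, mem_adjoint_domain_of_exists y ⟨w, h⟩⟩, adjoint_apply_eq hd _ h⟩

theorem ran_adjoint_le_orthogonal_nul (hd : Dense (A.domain : Set H)) : A†.ran ≤ A.nulᗮ := by
  intro w hw
  obtain ⟨y, h⟩ := (mem_ran_adjoint_iff hd).1 hw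
  rw [Submodule.mem_orthogonal']
  rintro _ ⟨x, hx : A x = 0, rfl⟩
  calc
    ⟪w, (x : H)⟫_ℂ = ⟪y, A x⟫_ℂ := h x
    _ = 0 := by rw [hx, inner_zero_right]

namespace IsMPInv

omit [CompleteSpace H] in
theorem hasOrthogonalProjection_ran (hB : IsMPInv A B) : A.ran.HasOrthogonalProjection where
  exists_orthogonal y := ⟨A ⟨B y, hB.1 y⟩, ⟨_, rfl⟩, hB.2.2.1 y (hB.1 y)⟩

omit [CompleteSpace H] in
theorem starProjection_ran_apply (hB : IsMPInv A B) [A.ran.HasOrthogonalProjection] (y : H) :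
    A.ran.starProjection y = A ⟨B y, hB.1 y⟩ :=
  Submodule.eq_starProjection_of_mem_orthogonal ⟨_, rfl⟩ (hB.2.2.1 y (hB.1 y))

theorem starProjection_orthogonal_nul_apply (hB : IsMPInv A B) (x : A.domain) :
    A.nulᗮ.starProjection (x : H) = B (A x) :=
  Submodule.eq_starProjection_of_mem_orthogonal (hB.2.1 (A x)) (hB.2.2.2 x)

theorem ran_adjoint_eq_orthogonal_nul (hB : IsMPInv A B) (hd : Dense (A.domain : Set H)) :
    A†.ran = A.nulᗮ := by
  refine (ran_adjoint_le_orthogonal_nul hd).antisymm fun w hw => ?_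
  -- On `N(A)ᗮ` the bounded adjoint of `B` is a right inverse of `A†`.
  refine (mem_ran_adjoint_iff hd).2 ⟨ContinuousLinearMap.adjoint B w, fun x => ?_⟩
  have h_sub : ⟪w, (x : H) - B (A x)⟫_ℂ = 0 :=
    Submodule.inner_right_of_mem_orthogonal hw (hB.2.2.2 x)
  calc
    ⟪w, (x : H)⟫_ℂ = ⟪w, B (A x)⟫_ℂ := by rwa [inner_sub_right, sub_eq_zero] at h_sub
    _ = ⟪ContinuousLinearMap.adjoint B w, A x⟫_ℂ :=
      (ContinuousLinearMap.adjoint_inner_left B (A x) w).symm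

end IsMPInv

theorem stmt4_general (A : H →ₗ.[ℂ] H) (hd : Dense (A.domain : Set H)) (B : H →L[ℂ] H)
    (hB : IsMPInv A B) :
    A.ran = A.adjoint.ran ↔
      ∀ x : A.domain, A ⟨B (x : H), hB.1 (x : H)⟩ = B (A x) := by
  have := hB.hasOrthogonalProjection_ran
  rw [hB.ran_adjoint_eq_orthogonal_nul hd, eq_iff_starProjection_eq_of_dense hd]
  simp only [hB.starProjection_ran_apply, hB.starProjection_orthogonal_nul_apply]

/-- Let `A` be a densely defined closed operator on a complex Hilbert
space `H` with closed range and let `B` be the Moore–Penrose inverse of `A`. Then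
`R(A) = R(A*)` if and only if `A (B x) = B (A x)` for every `x ∈ D(A)`. -/
theorem stmt4 (A : H →ₗ.[ℂ] H) (hd : Dense (A.domain : Set H)) (hc : A.IsClosed)
    (hr : IsClosed (A.ran : Set H)) (B : H →L[ℂ] H) (hB : IsMPInv A B) :
    A.ran = A.adjoint.ran ↔
      ∀ x : A.domain, A ⟨B (x : H), hB.1 (x : H)⟩ = B (A x) :=
  stmt4_general A hd B hB
end
end

section
/- Let A be a densely defined closed operator on a complex Hilbert space H which is EP. Then the operator A*A, defined by x ↦ A*(Ax) on the domain {x ∈ D(A) : Ax ∈ D(A*)}, is a densely defined closed operator which is EP; moreover R(A*A) = R(A*) and R(A*A) is closed. -/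
open scoped InnerProductSpace
open LinearPMap

noncomputable section

variable {H : Type*} [NormedAddCommGroup H] [InnerProductSpace ℂ H] [CompleteSpace H]

/-
Von Neumann's argument: the graph of a closed operator `A` and the rotated graph of `A*` are
orthogonal complements in `E ⊕ F`, and decomposing `(z, 0)` yields `x` with `A*A x + x = z`. So
`A*A + 1` is onto, and a symmetric operator with this property is densely defined and self-adjoint,
hence closed and EP once its range is closed. As `R(A)` is closed, every `v ∈ D(A*)` differs from
an element of `R(A)` by one of `R(A)ᗮ = N(A*)`, which gives `R(A*A) = R(A*)`. Finally, for the two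
bounded projections `π₁`, `π₂` of the graph, `A* v = u` says `π₂* v = π₁* u`, so that `R(A*)` is the
preimage under `π₁*` of `R(π₂*)`, and this is closed because `R(π₂) = R(A)` is.
-/

section Composition

variable {R E F G : Type*} [Ring R] [AddCommGroup E] [Module R E] [AddCommGroup F] [Module R F]
  [AddCommGroup G] [Module R G] {S : F →ₗ.[R] G} {A : E →ₗ.[R] F}

/-- The composite `S ∘ A` of two partially defined operators, on its natural domain
`{x ∈ D(A) : A x ∈ D(S)}`; for `LinearPMap.comp` the range of `A` has to lie in `D(S)`. -/
def pcomp (S : F →ₗ.[R] G) (A : E →ₗ.[R] F) : E →ₗ.[R] G where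
  domain := (S.domain.comap A.toFun).map A.domain.subtype
  toFun := S.toFun ∘ₗ
    A.toFun.restrict (p := S.domain.comap A.toFun) (q := S.domain) (fun _ hx ↦ hx) ∘ₗ
    (A.domain.equivSubtypeMap (S.domain.comap A.toFun)).symm.toLinearMap

theorem mem_pcomp_domain_iff {x : E} :
    x ∈ (pcomp S A).domain ↔ ∃ hx : x ∈ A.domain, A ⟨x, hx⟩ ∈ S.domain := by
  simp [pcomp]

theorem pcomp_apply {x : E} (hx : x ∈ (pcomp S A).domain) (hxA : x ∈ A.domain)
    (hxS : A ⟨x, hxA⟩ ∈ S.domain) : pcomp S A ⟨x, hx⟩ = S ⟨A ⟨x, hxA⟩, hxS⟩ :=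
  rfl

theorem mem_graph_pcomp_iff {x : E} {z : G} :
    (x, z) ∈ (pcomp S A).graph ↔ ∃ y, (x, y) ∈ A.graph ∧ (y, z) ∈ S.graph := by
  simp only [mem_graph_iff, Subtype.exists, exists_and_left, exists_eq_left]
  constructor
  · rintro ⟨hx, rfl⟩
    obtain ⟨hxA, hxS⟩ := mem_pcomp_domain_iff.1 hx
    exact ⟨A ⟨x, hxA⟩, ⟨hxA, rfl⟩, hxS, rfl⟩
  · rintro ⟨_, ⟨hxA, rfl⟩, hxS, rfl⟩
    exact ⟨mem_pcomp_domain_iff.2 ⟨hxA, hxS⟩, rfl⟩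

theorem eq_pcomp_of_forall_apply_eq {T : E →ₗ.[R] G}
    (hdom : ∀ x, x ∈ T.domain ↔ ∃ hx : x ∈ A.domain, A ⟨x, hx⟩ ∈ S.domain)
    (hval : ∀ (x : E) (hxT : x ∈ T.domain) (hxA : x ∈ A.domain) (hxS : A ⟨x, hxA⟩ ∈ S.domain),
      T ⟨x, hxT⟩ = S ⟨A ⟨x, hxA⟩, hxS⟩) :
    T = pcomp S A := by
  refine LinearPMap.ext (Submodule.ext fun x ↦ (hdom x).trans mem_pcomp_domain_iff.symm) ?_
  intro x hxT hxSA
  obtain ⟨hxA, hxS⟩ := mem_pcomp_domain_iff.1 hxSA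
  rw [hval x hxT hxA hxS, pcomp_apply hxSA hxA hxS]

end Composition

section InnerProduct

variable {𝕜 E F G : Type*} [RCLike 𝕜] [NormedAddCommGroup E] [InnerProductSpace 𝕜 E]
  [NormedAddCommGroup F] [InnerProductSpace 𝕜 F] [NormedAddCommGroup G] [InnerProductSpace 𝕜 G]

theorem inner_eq_inner_of_mem_graph {A : E →ₗ.[𝕜] F} {B : F →ₗ.[𝕜] E} (h : A.IsFormalAdjoint B)
    {x y' : E} {x' y : F} (hx : (x, x') ∈ A.graph) (hy : (y, y') ∈ B.graph) :
    ⟪x', y⟫_𝕜 = ⟪x, y'⟫_𝕜 := by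
  obtain ⟨a, rfl, rfl⟩ := A.mem_graph_iff.1 hx
  obtain ⟨b, rfl, rfl⟩ := B.mem_graph_iff.1 hy
  exact h a b

theorem isFormalAdjoint_pcomp {A : E →ₗ.[𝕜] F} {A' : F →ₗ.[𝕜] E} {S : F →ₗ.[𝕜] G}
    {S' : G →ₗ.[𝕜] F} (hA : A.IsFormalAdjoint A') (hS : S.IsFormalAdjoint S') :
    (pcomp S A).IsFormalAdjoint (pcomp A' S') := by
  intro x y
  obtain ⟨u, hxu, hux⟩ := mem_graph_pcomp_iff.1 ((pcomp S A).mem_graph x)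
  obtain ⟨v, hyv, hvy⟩ := mem_graph_pcomp_iff.1 ((pcomp A' S').mem_graph y)
  exact (inner_eq_inner_of_mem_graph hS hux hyv).trans (inner_eq_inner_of_mem_graph hA hxu hvy)

section SymmetricSurjective

variable {T : E →ₗ.[𝕜] E} {c : ℝ}

-- Pairing with `(T + c) w` identifies `y` with the preimage of `u + c y` under `T + c`.
theorem mem_graph_of_forall_inner_eq (hT : T.IsFormalAdjoint T)
    (hsurj : ∀ z, ∃ x : T.domain, T x + (c : 𝕜) • (x : E) = z) {y u : E}
    (h : ∀ w : T.domain, ⟪u, w⟫_𝕜 = ⟪y, T w⟫_𝕜) : (y, u) ∈ T.graph := by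
  obtain ⟨x, hx⟩ := hsurj (u + (c : 𝕜) • y)
  have hyx : y = x := by
    refine ext_inner_right 𝕜 fun z ↦ ?_
    obtain ⟨w, rfl⟩ := hsurj z
    calc ⟪y, T w + (c : 𝕜) • (w : E)⟫_𝕜
        = ⟪u + (c : 𝕜) • y, w⟫_𝕜 := by
          simp only [inner_add_left, inner_add_right, inner_smul_left, inner_smul_right,
            RCLike.conj_ofReal, h w]
      _ = ⟪T x + (c : 𝕜) • (x : E), w⟫_𝕜 := by rw [hx]
      _ = ⟪(x : E), T w + (c : 𝕜) • (w : E)⟫_𝕜 := by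
          simp only [inner_add_left, inner_add_right, inner_smul_left, inner_smul_right,
            RCLike.conj_ofReal, hT x w]
  subst hyx
  exact T.mem_graph_iff.2 ⟨x, rfl, add_right_cancel hx⟩

variable [CompleteSpace E]

theorem dense_domain_of_isFormalAdjoint_of_surjective (hT : T.IsFormalAdjoint T)
    (hsurj : ∀ z, ∃ x : T.domain, T x + (c : 𝕜) • (x : E) = z) : Dense (T.domain : Set E) := by
  rw [Submodule.dense_iff_topologicalClosure_eq_top, Submodule.topologicalClosure_eq_top_iff,
    Submodule.eq_bot_iff]
  intro z hz
  have hgraph : ((0 : E), z) ∈ T.graph := mem_graph_of_forall_inner_eq hT hsurj fun w ↦ by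
    rw [inner_zero_left, Submodule.inner_left_of_mem_orthogonal w.2 hz]
  exact T.graph_fst_eq_zero_snd hgraph rfl

theorem isSelfAdjoint_of_isFormalAdjoint_of_surjective (hT : T.IsFormalAdjoint T)
    (hsurj : ∀ z, ∃ x : T.domain, T x + (c : 𝕜) • (x : E) = z) : IsSelfAdjoint T := by
  have hdense := dense_domain_of_isFormalAdjoint_of_surjective hT hsurj
  refine isSelfAdjoint_def.2 (le_antisymm (le_of_le_graph ?_) (hT.le_adjoint hdense))
  rintro ⟨y, u⟩ hyu
  exact mem_graph_of_forall_inner_eq hT hsurj fun w ↦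
    inner_eq_inner_of_mem_graph (adjoint_isFormalAdjoint hdense) hyu (T.mem_graph w)

end SymmetricSurjective

section ClosedRange

variable [CompleteSpace E] [CompleteSpace F] {T : E →L[𝕜] F}

theorem exists_antilipschitzWith_adjoint_of_surjective (hT : Function.Surjective T) :
    ∃ K, AntilipschitzWith K (ContinuousLinearMap.adjoint T) := by
  obtain ⟨C, hC, hpre⟩ := T.exists_preimage_norm_le hT
  refine ⟨⟨C, hC.le⟩, AddMonoidHomClass.antilipschitz_of_bound _ fun y ↦ ?_⟩
  obtain ⟨x, rfl, hx⟩ := hpre y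
  set z := ContinuousLinearMap.adjoint T (T x)
  have hsq : ‖T x‖ * ‖T x‖ ≤ (C * ‖z‖) * ‖T x‖ := calc
    ‖T x‖ * ‖T x‖ = RCLike.re ⟪z, x⟫_𝕜 := by
      rw [ContinuousLinearMap.adjoint_inner_left, inner_self_eq_norm_mul_norm]
    _ ≤ ‖z‖ * ‖x‖ := re_inner_le_norm _ _
    _ ≤ ‖z‖ * (C * ‖T x‖) := by gcongr
    _ = (C * ‖z‖) * ‖T x‖ := by ring
  rcases (norm_nonneg (T x)).eq_or_lt with h0 | hpos
  · rw [← h0]; positivity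
  · exact le_of_mul_le_mul_right hsq hpos

theorem isClosed_range_continuousLinearMap_adjoint (hT : IsClosed (T.range : Set F)) :
    IsClosed ((ContinuousLinearMap.adjoint T).range : Set E) := by
  have : CompleteSpace T.range := hT.completeSpace_coe
  obtain ⟨K, hK⟩ := exists_antilipschitzWith_adjoint_of_surjective (T := T.rangeRestrict)
    T.toLinearMap.surjective_rangeRestrict
  have hfactor : ContinuousLinearMap.adjoint T =
      ContinuousLinearMap.adjoint T.rangeRestrict ∘L T.range.orthogonalProjectionOnto := by
    rw [← Submodule.adjoint_subtypeL, ← ContinuousLinearMap.adjoint_comp]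
    rfl
  have hrange : (ContinuousLinearMap.adjoint T).range =
      (ContinuousLinearMap.adjoint T.rangeRestrict).range := by
    rw [hfactor]
    exact LinearMap.range_comp_of_range_eq_top _ (LinearMap.range_eq_top.2 fun y ↦
      ⟨y, Submodule.orthogonalProjectionOnto_mem_subspace_eq_self y⟩)
  rw [hrange]
  exact hK.isClosed_range (ContinuousLinearMap.uniformContinuous _)

end ClosedRange

section Graph

/-- The graph of `A` inside the Hilbert direct sum `E ⊕ F`, so that it carries an inner product
(`E × F` itself has the supremum norm). -/
def hilbertGraph (A : E →ₗ.[𝕜] F) : Submodule 𝕜 (WithLp 2 (E × F)) :=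
  A.graph.comap (WithLp.linearEquiv 2 𝕜 (E × F)).toLinearMap

/-- The projection of the graph of `A` to the source space. -/
def graphFst (A : E →ₗ.[𝕜] F) : hilbertGraph A →L[𝕜] E :=
  WithLp.fstL 2 𝕜 E F ∘L (hilbertGraph A).subtypeL

/-- The projection of the graph of `A` to the target space: the operator `A`, made bounded by
giving its domain the graph norm. -/
def graphSnd (A : E →ₗ.[𝕜] F) : hilbertGraph A →L[𝕜] F :=
  WithLp.sndL 2 𝕜 E F ∘L (hilbertGraph A).subtypeL

variable {A : E →ₗ.[𝕜] F}

theorem range_graphSnd : (graphSnd A).range = LinearMap.range A.toFun := by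
  ext y
  constructor
  · rintro ⟨⟨g, hg⟩, rfl⟩
    obtain ⟨x, -, hx⟩ := A.mem_graph_iff.1 hg
    exact ⟨x, hx⟩
  · rintro ⟨x, rfl⟩
    exact ⟨⟨WithLp.toLp 2 (x, A x), A.mem_graph x⟩, rfl⟩

variable [CompleteSpace E]

theorem mem_graph_adjoint_iff (hd : Dense (A.domain : Set E)) {v : F} {u : E} :
    (v, u) ∈ A.adjoint.graph ↔ ∀ a b, (a, b) ∈ A.graph → ⟪b, v⟫_𝕜 = ⟪a, u⟫_𝕜 := by
  simp only [adjoint_graph_eq_graph_adjoint hd, Submodule.mem_adjoint_iff, sub_eq_zero]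

theorem mem_graph_adjoint_zero_iff (hd : Dense (A.domain : Set E)) {v : F} :
    (v, 0) ∈ A.adjoint.graph ↔ v ∈ (LinearMap.range A.toFun)ᗮ := by
  rw [mem_graph_adjoint_iff hd, Submodule.mem_orthogonal, ← graph_map_snd_eq_range]
  simp only [inner_zero_right, Submodule.mem_map, LinearMap.snd_apply, Prod.exists,
    exists_eq_right, forall_exists_index]
  exact forall_comm

variable [CompleteSpace F]

theorem completeSpace_hilbertGraph (hc : A.IsClosed) : CompleteSpace (hilbertGraph A) :=
  (hc.preimage (WithLp.prod_continuous_ofLp 2 E F)).completeSpace_coe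

theorem exists_mem_graph_sub_mem_graph_adjoint (hd : Dense (A.domain : Set E)) (hc : A.IsClosed)
    (z : E) (w : F) : ∃ x y, (x, y) ∈ A.graph ∧ (y - w, z - x) ∈ A.adjoint.graph := by
  have := completeSpace_hilbertGraph hc
  obtain ⟨g, hg, k, hk, hgk⟩ :=
    (hilbertGraph A).exists_add_mem_mem_orthogonal (WithLp.toLp 2 (z, w))
  refine ⟨g.fst, g.snd, hg, (mem_graph_adjoint_iff hd).2 fun a b hab ↦ ?_⟩
  have hz : z = g.fst + k.fst := congrArg WithLp.fst hgk
  have hw : w = g.snd + k.snd := congrArg WithLp.snd hgk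
  have horth : ⟪a, k.fst⟫_𝕜 + ⟪b, k.snd⟫_𝕜 = 0 := hk (WithLp.toLp 2 (a, b)) hab
  rw [hz, hw, add_sub_cancel_left, sub_add_cancel_left, inner_neg_right]
  exact (eq_neg_of_add_eq_zero_left horth).symm

theorem mem_graph_adjoint_iff_adjoint_graphSnd_eq [CompleteSpace (hilbertGraph A)]
    (hd : Dense (A.domain : Set E)) {v : F} {u : E} :
    (v, u) ∈ A.adjoint.graph ↔
      ContinuousLinearMap.adjoint (graphSnd A) v = ContinuousLinearMap.adjoint (graphFst A) u := by
  rw [mem_graph_adjoint_iff hd]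
  constructor
  · intro h
    refine ext_inner_left 𝕜 fun g ↦ ?_
    rw [ContinuousLinearMap.adjoint_inner_right, ContinuousLinearMap.adjoint_inner_right]
    exact h _ _ g.2
  · intro h a b hab
    let g : hilbertGraph A := ⟨WithLp.toLp 2 (a, b), hab⟩
    calc ⟪b, v⟫_𝕜 = ⟪g, ContinuousLinearMap.adjoint (graphSnd A) v⟫_𝕜 :=
          ((graphSnd A).adjoint_inner_right g v).symm
      _ = ⟪g, ContinuousLinearMap.adjoint (graphFst A) u⟫_𝕜 := by rw [h]
      _ = ⟪a, u⟫_𝕜 := (graphFst A).adjoint_inner_right g u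

theorem range_adjoint_eq_comap [CompleteSpace (hilbertGraph A)]
    (hd : Dense (A.domain : Set E)) :
    LinearMap.range A.adjoint.toFun = (ContinuousLinearMap.adjoint (graphSnd A)).range.comap
      (ContinuousLinearMap.adjoint (graphFst A)).toLinearMap := by
  ext u
  simp only [← graph_map_snd_eq_range, Submodule.mem_map, LinearMap.snd_apply, Prod.exists,
    exists_eq_right, Submodule.mem_comap, LinearMap.mem_range, ContinuousLinearMap.coe_coe,
    mem_graph_adjoint_iff_adjoint_graphSnd_eq hd]

theorem isClosed_range_linearPMap_adjoint (hd : Dense (A.domain : Set E)) (hc : A.IsClosed)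
    (hr : IsClosed (LinearMap.range A.toFun : Set F)) :
    IsClosed (LinearMap.range A.adjoint.toFun : Set E) := by
  have := completeSpace_hilbertGraph hc
  rw [← range_graphSnd] at hr
  rw [range_adjoint_eq_comap hd]
  exact (isClosed_range_continuousLinearMap_adjoint hr).preimage
    (ContinuousLinearMap.adjoint (graphFst A)).continuous

end Graph

section AdjointPcompSelf

variable [CompleteSpace E] {A : E →ₗ.[𝕜] F}

theorem range_adjoint_pcomp_self [(LinearMap.range A.toFun).HasOrthogonalProjection]
    (hd : Dense (A.domain : Set E)) :
    LinearMap.range (pcomp A.adjoint A).toFun = LinearMap.range A.adjoint.toFun := by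
  simp only [← graph_map_snd_eq_range]
  apply le_antisymm
  · rintro _ ⟨⟨x, u⟩, hxu, rfl⟩
    obtain ⟨v, -, hvu⟩ := mem_graph_pcomp_iff.1 hxu
    exact ⟨(v, u), hvu, rfl⟩
  · rintro _ ⟨⟨v, u⟩, hvu, rfl⟩
    obtain ⟨_, ⟨x, rfl⟩, q, hq, rfl⟩ :=
      (LinearMap.range A.toFun).exists_add_mem_mem_orthogonal v
    have hq0 : (q, 0) ∈ A.adjoint.graph := (mem_graph_adjoint_zero_iff hd).2 hq
    have hxu : (A x, u) ∈ A.adjoint.graph := by simpa using sub_mem hvu hq0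
    exact ⟨(x, u), mem_graph_pcomp_iff.2 ⟨A x, A.mem_graph x, hxu⟩, rfl⟩

variable [CompleteSpace F]

theorem exists_adjoint_pcomp_self_add_eq (hd : Dense (A.domain : Set E)) (hc : A.IsClosed)
    (z : E) : ∃ x : (pcomp A.adjoint A).domain, pcomp A.adjoint A x + (x : E) = z := by
  obtain ⟨x, y, hxy, hyz⟩ := exists_mem_graph_sub_mem_graph_adjoint hd hc z 0
  rw [sub_zero] at hyz
  obtain ⟨x, rfl, hx⟩ := (mem_graph_iff _).1 (mem_graph_pcomp_iff.2 ⟨y, hxy, hyz⟩)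
  exact ⟨x, eq_sub_iff_add_eq.1 hx⟩

theorem isSelfAdjoint_adjoint_pcomp_self (hd : Dense (A.domain : Set E)) (hc : A.IsClosed) :
    IsSelfAdjoint (pcomp A.adjoint A) := by
  have hadj : A.adjoint.IsFormalAdjoint A := adjoint_isFormalAdjoint hd
  refine isSelfAdjoint_of_isFormalAdjoint_of_surjective (c := 1)
    (isFormalAdjoint_pcomp hadj.symm hadj) fun z ↦ ?_
  simpa using exists_adjoint_pcomp_self_add_eq hd hc z

end AdjointPcompSelf

theorem stmt9_general [CompleteSpace E] [CompleteSpace F] (A : E →ₗ.[𝕜] F)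
    (hd : Dense (A.domain : Set E)) (hc : A.IsClosed)
    (hr : IsClosed (LinearMap.range A.toFun : Set F)) (T : E →ₗ.[𝕜] E)
    (hTdom : ∀ x : E, x ∈ T.domain ↔
      ∃ hx : x ∈ A.domain, A ⟨x, hx⟩ ∈ A.adjoint.domain)
    (hTval : ∀ (x : E) (hxT : x ∈ T.domain) (h1 : x ∈ A.domain)
      (h2 : A ⟨x, h1⟩ ∈ A.adjoint.domain), T ⟨x, hxT⟩ = A.adjoint ⟨A ⟨x, h1⟩, h2⟩) :
    IsSelfAdjoint T ∧ LinearMap.range T.toFun = LinearMap.range A.adjoint.toFun ∧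
      IsClosed (LinearMap.range T.toFun : Set E) := by
  obtain rfl := eq_pcomp_of_forall_apply_eq hTdom hTval
  have : CompleteSpace (LinearMap.range A.toFun) := hr.completeSpace_coe
  have hran := range_adjoint_pcomp_self hd
  exact ⟨isSelfAdjoint_adjoint_pcomp_self hd hc, hran,
    hran ▸ isClosed_range_linearPMap_adjoint hd hc hr⟩

end InnerProduct

/-- Let `A` be a densely defined closed operator on a complex Hilbert
space `H` which is EP. Then the operator `A* A`, i.e. the operator `T` with domain
`{x ∈ D(A) : A x ∈ D(A*)}` given by `x ↦ A* (A x)`, is a densely defined closed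
operator which is EP; moreover `R(A* A) = R(A*)` and `R(A* A)` is closed. -/
theorem stmt9 (A : H →ₗ.[ℂ] H) (hd : Dense (A.domain : Set H)) (hc : A.IsClosed)
    (hr : IsClosed (A.ran : Set H)) (hEP : A.ran = A.adjoint.ran)
    (T : H →ₗ.[ℂ] H)
    (hTdom : ∀ x : H, x ∈ T.domain ↔
      ∃ hx : x ∈ A.domain, A ⟨x, hx⟩ ∈ A.adjoint.domain)
    (hTval : ∀ (x : H) (hxT : x ∈ T.domain) (h1 : x ∈ A.domain)
      (h2 : A ⟨x, h1⟩ ∈ A.adjoint.domain), T ⟨x, hxT⟩ = A.adjoint ⟨A ⟨x, h1⟩, h2⟩) :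
    Dense (T.domain : Set H) ∧ T.IsClosed ∧ T.ran = T.adjoint.ran ∧
      T.ran = A.adjoint.ran ∧ IsClosed (T.ran : Set H) := by
  obtain ⟨hT, hran, hclosed⟩ := stmt9_general A hd hc hr T hTdom hTval
  exact ⟨hT.dense_domain, hT.isClosed, congrArg LinearPMap.ran hT.symm, hran, hclosed⟩
end
end

section
/- Let A be a densely defined closed operator on a complex Hilbert space H which is EP. Then there exists a bijective linear map C from D(A*) onto D(A) such that A*y = A(Cy) for every y ∈ D(A*). -/
open scoped InnerProductSpace
open LinearPMap

noncomputable section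

variable {H : Type*} [NormedAddCommGroup H] [InnerProductSpace ℂ H] [CompleteSpace H]

/-! The graph of a closed operator equals its double adjoint. Hence `N(A) = R(A*)ᗮ`, dual to
`N(A*) = R(A)ᗮ`, and equal ranges force equal null spaces. The rest is algebra: two linear maps with
the same range and isomorphic kernels differ by an isomorphism of their domains, because a
complement of each kernel is carried isomorphically onto the common range. -/

section Algebra

variable {R M N V : Type*} [Ring R] [AddCommGroup M] [Module R M] [AddCommGroup N] [Module R N]
  [AddCommGroup V] [Module R V]

theorem exists_linearEquiv_of_isCompl_ker {f : M →ₗ[R] V} {g : N →ₗ[R] V}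
    {p : Submodule R M} {q : Submodule R N} (hp : IsCompl p f.ker) (hq : IsCompl q g.ker)
    (hrange : f.range = g.range) (e : f.ker ≃ₗ[R] g.ker) :
    ∃ C : M ≃ₗ[R] N, ∀ x, f x = g (C x) := by
  let c : p ≃ₗ[R] q := f.kerComplementEquivRange hp ≪≫ₗ LinearEquiv.ofEq _ _ hrange ≪≫ₗ
    (g.kerComplementEquivRange hq).symm
  have g_comp_c (u : p) : g (c u) = f u :=
    congrArg Subtype.val ((g.kerComplementEquivRange hq).apply_symm_apply _)
  refine ⟨(p.prodEquivOfIsCompl _ hp).symm ≪≫ₗ c.prodCongr e ≪≫ₗ q.prodEquivOfIsCompl _ hq, ?_⟩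
  refine (p.prodEquivOfIsCompl _ hp).surjective.forall.2 fun ⟨u, k⟩ => ?_
  simp [g_comp_c]

theorem mk_zero_mem_graph_iff {A : M →ₗ.[R] N} {x : M} :
    (x, 0) ∈ A.graph ↔ x ∈ A.toFun.ker.map A.domain.subtype := by
  simp

theorem exists_linearEquiv_domain_of_map_ker_eq {K E₁ E₂ : Type*} [DivisionRing K]
    [AddCommGroup E₁] [Module K E₁] [AddCommGroup E₂] [Module K E₂] {S T : E₁ →ₗ.[K] E₂}
    (hker : S.toFun.ker.map S.domain.subtype = T.toFun.ker.map T.domain.subtype)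
    (hrange : S.toFun.range = T.toFun.range) :
    ∃ C : S.domain ≃ₗ[K] T.domain, ∀ x, S x = T (C x) := by
  obtain ⟨p, hp⟩ := S.toFun.ker.exists_isCompl
  obtain ⟨q, hq⟩ := T.toFun.ker.exists_isCompl
  let e : S.toFun.ker ≃ₗ[K] T.toFun.ker :=
    Submodule.equivMapOfInjective _ S.domain.subtype_injective _ ≪≫ₗ LinearEquiv.ofEq _ _ hker ≪≫ₗ
      (Submodule.equivMapOfInjective _ T.domain.subtype_injective _).symm
  exact exists_linearEquiv_of_isCompl_ker hp.symm hq.symm hrange e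

end Algebra

section Adjoint

variable {𝕜 E F : Type*} [RCLike 𝕜] [NormedAddCommGroup E] [InnerProductSpace 𝕜 E]
  [NormedAddCommGroup F] [InnerProductSpace 𝕜 F]

theorem mk_zero_mem_adjoint_iff {g : Submodule 𝕜 (E × F)} {y : F} :
    (y, 0) ∈ g.adjoint ↔ y ∈ (g.map (LinearMap.snd 𝕜 E F))ᗮ := by
  simp only [Submodule.mem_adjoint_iff, inner_zero_right, sub_zero, Submodule.mem_orthogonal,
    Submodule.mem_map, LinearMap.snd_apply, Prod.exists, exists_eq_right, forall_exists_index]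
  exact forall_comm

theorem le_adjoint_adjoint (g : Submodule 𝕜 (E × F)) : g ≤ g.adjoint.adjoint := by
  rintro ⟨x, y⟩ hxy
  rw [Submodule.mem_adjoint_iff]
  intro a b hab
  have h : ⟪y, a⟫_𝕜 = ⟪x, b⟫_𝕜 := sub_eq_zero.1 ((g.mem_adjoint_iff _).1 hab x y hxy)
  rw [← inner_conj_symm b, ← inner_conj_symm a, h, sub_self]

theorem adjoint_adjoint_of_isClosed [CompleteSpace E] [CompleteSpace F]
    {g : Submodule 𝕜 (E × F)} (hg : IsClosed (g : Set (E × F))) : g.adjoint.adjoint = g := by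
  refine le_antisymm (fun x hx => ?_) (le_adjoint_adjoint g)
  let G : Submodule 𝕜 (WithLp 2 (E × F)) :=
    g.comap (WithLp.linearEquiv 2 𝕜 (E × F)).toLinearMap
  have : CompleteSpace G :=
    (hg.preimage (WithLp.prod_continuous_ofLp 2 E F)).completeSpace_coe
  suffices WithLp.toLp 2 x ∈ Gᗮᗮ by rwa [G.orthogonal_orthogonal] at this
  rw [Submodule.mem_orthogonal]
  intro w hw
  -- `(a, b) ↦ (b, -a)` carries `Gᗮ` onto `g.adjoint`.
  have rotate_mem : (w.snd, -w.fst) ∈ g.adjoint := by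
    rw [Submodule.mem_adjoint_iff]
    intro a b hab
    simpa [add_comm] using (G.mem_orthogonal w).1 hw (WithLp.toLp 2 (a, b)) hab
  have h := (g.adjoint.mem_adjoint_iff x).1 hx _ _ rotate_mem
  rwa [inner_neg_left, ← neg_add', neg_eq_zero] at h

variable [CompleteSpace E] {A : E →ₗ.[𝕜] F}

theorem map_ker_adjoint_eq_orthogonal_range (hd : Dense (A.domain : Set E)) :
    A†.toFun.ker.map A†.domain.subtype = A.toFun.rangeᗮ := by
  ext y
  rw [← mk_zero_mem_graph_iff, adjoint_graph_eq_graph_adjoint hd, mk_zero_mem_adjoint_iff,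
    graph_map_snd_eq_range]

theorem map_ker_eq_orthogonal_range_adjoint [CompleteSpace F] (hd : Dense (A.domain : Set E))
    (hc : A.IsClosed) : A.toFun.ker.map A.domain.subtype = A†.toFun.rangeᗮ := by
  ext x
  rw [← mk_zero_mem_graph_iff, ← adjoint_adjoint_of_isClosed hc, mk_zero_mem_adjoint_iff,
    ← adjoint_graph_eq_graph_adjoint hd, graph_map_snd_eq_range]

theorem stmt11_general {A : E →ₗ.[𝕜] E} (hd : Dense (A.domain : Set E)) (hc : A.IsClosed)
    (hrange : A.toFun.range = A†.toFun.range) :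
    ∃ C : A†.domain ≃ₗ[𝕜] A.domain, ∀ y, A† y = A (C y) := by
  refine exists_linearEquiv_domain_of_map_ker_eq ?_ hrange.symm
  rw [map_ker_adjoint_eq_orthogonal_range hd, map_ker_eq_orthogonal_range_adjoint hd hc, hrange]

end Adjoint

/-- Let `A` be a densely defined closed operator on a complex Hilbert
space `H` which is EP. Then there exists a bijective linear map `C` from `D(A*)` onto
`D(A)` such that `A* y = A (C y)` for every `y ∈ D(A*)`. -/
theorem stmt11 (A : H →ₗ.[ℂ] H) (hd : Dense (A.domain : Set H)) (hc : A.IsClosed)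
    (hr : IsClosed (A.ran : Set H)) (hEP : A.ran = A.adjoint.ran) :
    ∃ C : A.adjoint.domain →ₗ[ℂ] A.domain, Function.Bijective C ∧
      ∀ y : A.adjoint.domain, A.adjoint y = A (C y) := by
  obtain ⟨C, hC⟩ := stmt11_general hd hc hEP
  exact ⟨C, C.bijective, hC⟩
end
end

section
/- Let A be a densely defined closed operator on a complex Hilbert space H with closed range and let B be the Moore–Penrose inverse of A. If A is hypo-EP (i.e., R(A) ⊆ R(A*)), then A(B(B(Ax))) = A(Bx) for every x ∈ D(A). -/
open scoped InnerProductSpace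
open LinearPMap

noncomputable section

variable {H : Type*} [NormedAddCommGroup H] [InnerProductSpace ℂ H] [CompleteSpace H]

/-! The operator `A ∘ B` is the orthogonal projection onto `R(A)`, so the claim is that it kills
`x - B (A x)`, which lies in `N(A)ᗮᗮ`. Since `R(A) ⊆ R(A*) ⊆ N(A)ᗮ`, taking orthogonal complements
gives `N(A)ᗮᗮ ⊆ R(A)ᗮ`, the null space of that projection. -/

variable {A S : H →ₗ.[ℂ] H} {B : H →L[ℂ] H}

omit [CompleteSpace H] in
theorem ran_le_orthogonal_nul_of_isFormalAdjoint (h : S.IsFormalAdjoint A) : S.ran ≤ A.nulᗮ := by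
  rintro _ ⟨z, rfl⟩
  rw [Submodule.mem_orthogonal']
  rintro _ ⟨w, hw, rfl⟩
  have hAw : A w = 0 := hw
  calc ⟪S z, (w : H)⟫_ℂ = ⟪(z : H), A w⟫_ℂ := h z w
    _ = 0 := by rw [hAw, inner_zero_right]

omit [CompleteSpace H] in
theorem IsMPInv.apply_eq_apply_of_sub_mem_orthogonal_ran (hB : IsMPInv A B) {y z : H}
    (h : y - z ∈ A.ranᗮ) : A ⟨B y, hB.1 y⟩ = A ⟨B z, hB.1 z⟩ := by
  obtain ⟨hdom, -, hproj, -⟩ := hB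
  have hran : A ⟨B y, hdom y⟩ - A ⟨B z, hdom z⟩ ∈ A.ran := A.ran.sub_mem ⟨_, rfl⟩ ⟨_, rfl⟩
  have horth : A ⟨B y, hdom y⟩ - A ⟨B z, hdom z⟩ ∈ A.ranᗮ := by
    have hsub := sub_mem h (sub_mem (hproj y (hdom y)) (hproj z (hdom z)))
    rwa [sub_sub_sub_comm, sub_sub_cancel, sub_sub_cancel] at hsub
  exact sub_eq_zero.mp (Submodule.disjoint_def.mp A.ran.orthogonal_disjoint _ hran horth)

omit [CompleteSpace H] in
theorem stmt14_general (hB : IsMPInv A B) (hle : A.ran ≤ A.nulᗮ) (x : A.domain) :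
    A ⟨B (B (A x)), hB.1 (B (A x))⟩ = A ⟨B (x : H), hB.1 (x : H)⟩ := by
  have hx : (x : H) - B (A x) ∈ A.ranᗮ := Submodule.orthogonal_le hle (hB.2.2.2 x)
  exact (hB.apply_eq_apply_of_sub_mem_orthogonal_ran hx).symm

/-- Let `A` be a densely defined closed operator on a complex Hilbert
space `H` with closed range and let `B` be the Moore–Penrose inverse of `A`. If `A` is
hypo-EP (`R(A) ⊆ R(A*)`), then `A (B (B (A x))) = A (B x)` for every `x ∈ D(A)`. -/
theorem stmt14 (A : H →ₗ.[ℂ] H) (hd : Dense (A.domain : Set H)) (hc : A.IsClosed)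
    (hr : IsClosed (A.ran : Set H)) (B : H →L[ℂ] H) (hB : IsMPInv A B)
    (hhypo : A.ran ≤ A.adjoint.ran) :
    ∀ x : A.domain, A ⟨B (B (A x)), hB.1 (B (A x))⟩ = A ⟨B (x : H), hB.1 (x : H)⟩ :=
  stmt14_general hB
    (hhypo.trans (ran_le_orthogonal_nul_of_isFormalAdjoint (adjoint_isFormalAdjoint hd)))
end
end

section
/- Let A be a densely defined closed operator on a complex Hilbert space H with closed range and let B be the Moore–Penrose inverse of A. If A(B(B(Ax))) = A(Bx) for every x ∈ D(A), then Re⟨A(Bx), x⟩ ≤ Re⟨B(Ax), x⟩ for every x ∈ D(A) (both inner products are in fact real). -/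
open scoped InnerProductSpace
open LinearPMap

noncomputable section

variable {H : Type*} [NormedAddCommGroup H] [InnerProductSpace ℂ H] [CompleteSpace H]

/-! The operators `A ∘ B` and `B ∘ A` act as the orthogonal projections `Q` onto `R(A)` and `P` onto
`N(A)ᗮ`, so the two inner products are `‖Q x‖ ^ 2` and `‖P x‖ ^ 2`. The hypothesis reads
`Q (P x) = Q x`, and a projection does not increase norms, so `‖Q x‖ = ‖Q (P x)‖ ≤ ‖P x‖`. -/

section Orthogonality

variable {𝕜 E : Type*} [RCLike 𝕜] [SeminormedAddCommGroup E] [InnerProductSpace 𝕜 E] {u v : E}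

theorem inner_eq_norm_sq_of_inner_sub_eq_zero (huv : ⟪u, v - u⟫_𝕜 = 0) :
    ⟪u, v⟫_𝕜 = (‖u‖ : 𝕜) ^ 2 := by
  rw [inner_sub_right, sub_eq_zero] at huv
  rw [huv, inner_self_eq_norm_sq_to_K]

theorem norm_le_of_inner_sub_eq_zero (huv : ⟪u, v - u⟫_𝕜 = 0) : ‖u‖ ≤ ‖v‖ := by
  have pythagoras := norm_add_sq_eq_norm_sq_add_norm_sq_of_inner_eq_zero u (v - u) huv
  rw [add_sub_cancel] at pythagoras
  rw [mul_self_le_mul_self_iff (norm_nonneg u) (norm_nonneg v), pythagoras]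
  exact le_add_of_nonneg_right (mul_self_nonneg _)

end Orthogonality

namespace IsMPInv

variable {E : Type*} [NormedAddCommGroup E] [InnerProductSpace ℂ E]
  {A : E →ₗ.[ℂ] E} {B : E →L[ℂ] E}

theorem inner_apply_inv_sub_eq_zero (hB : IsMPInv A B) (y : E) :
    ⟪A ⟨B y, hB.1 y⟩, y - A ⟨B y, hB.1 y⟩⟫_ℂ = 0 :=
  Submodule.inner_right_of_mem_orthogonal (LinearMap.mem_range_self A.toFun _)
    (hB.2.2.1 y (hB.1 y))

theorem inner_inv_apply_sub_eq_zero (hB : IsMPInv A B) (x : A.domain) :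
    ⟪B (A x), x - B (A x)⟫_ℂ = 0 :=
  Submodule.inner_right_of_mem_orthogonal (hB.2.1 (A x)) (hB.2.2.2 x)

theorem inner_apply_inv_self (hB : IsMPInv A B) (y : E) :
    ⟪A ⟨B y, hB.1 y⟩, y⟫_ℂ = (‖A ⟨B y, hB.1 y⟩‖ : ℂ) ^ 2 :=
  inner_eq_norm_sq_of_inner_sub_eq_zero (hB.inner_apply_inv_sub_eq_zero y)

theorem inner_inv_apply_self (hB : IsMPInv A B) (x : A.domain) :
    ⟪B (A x), (x : E)⟫_ℂ = (‖B (A x)‖ : ℂ) ^ 2 :=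
  inner_eq_norm_sq_of_inner_sub_eq_zero (hB.inner_inv_apply_sub_eq_zero x)

theorem norm_apply_inv_le (hB : IsMPInv A B) (y : E) : ‖A ⟨B y, hB.1 y⟩‖ ≤ ‖y‖ :=
  norm_le_of_inner_sub_eq_zero (hB.inner_apply_inv_sub_eq_zero y)

end IsMPInv

theorem stmt15_general {E : Type*} [NormedAddCommGroup E] [InnerProductSpace ℂ E]
    {A : E →ₗ.[ℂ] E} {B : E →L[ℂ] E} (hB : IsMPInv A B) {x : A.domain}
    (h : A ⟨B (B (A x)), hB.1 (B (A x))⟩ = A ⟨B (x : E), hB.1 (x : E)⟩) :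
    (⟪A ⟨B (x : E), hB.1 (x : E)⟩, (x : E)⟫_ℂ).re ≤ (⟪B (A x), (x : E)⟫_ℂ).re := by
  have norm_le : ‖A ⟨B (x : E), hB.1 (x : E)⟩‖ ≤ ‖B (A x)‖ := h ▸ hB.norm_apply_inv_le (B (A x))
  rw [hB.inner_apply_inv_self, hB.inner_inv_apply_self]
  norm_cast
  gcongr

/-- Let `A` be a densely defined closed operator on a complex Hilbert
space `H` with closed range and let `B` be the Moore–Penrose inverse of `A`. If
`A (B (B (A x))) = A (B x)` for every `x ∈ D(A)`, then
`Re ⟪A (B x), x⟫ ≤ Re ⟪B (A x), x⟫` for every `x ∈ D(A)`. -/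
theorem stmt15 (A : H →ₗ.[ℂ] H) (hd : Dense (A.domain : Set H)) (hc : A.IsClosed)
    (hr : IsClosed (A.ran : Set H)) (B : H →L[ℂ] H) (hB : IsMPInv A B)
    (h : ∀ x : A.domain,
      A ⟨B (B (A x)), hB.1 (B (A x))⟩ = A ⟨B (x : H), hB.1 (x : H)⟩) :
    ∀ x : A.domain,
      (⟪A ⟨B (x : H), hB.1 (x : H)⟩, (x : H)⟫_ℂ).re ≤ (⟪B (A x), (x : H)⟫_ℂ).re :=
  fun x ↦ stmt15_general hB (h x)
end
end

section
/- Let A be a densely defined closed operator on a complex Hilbert space H which is hypo-EP. Then for each x ∈ D(A) there exists a constant k > 0 such that |⟨Ax, y⟩| ≤ k ‖Ay‖ for all y ∈ D(A). -/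
open scoped InnerProductSpace
open LinearPMap

noncomputable section

variable {H : Type*} [NormedAddCommGroup H] [InnerProductSpace ℂ H] [CompleteSpace H]

section FormalAdjoint

variable {𝕜 E F : Type*} [RCLike 𝕜]
variable [NormedAddCommGroup E] [InnerProductSpace 𝕜 E]
variable [NormedAddCommGroup F] [InnerProductSpace 𝕜 F]

theorem norm_inner_le_of_isFormalAdjoint {S : F →ₗ.[𝕜] E} {T : E →ₗ.[𝕜] F}
    (h : S.IsFormalAdjoint T) (z : S.domain) (y : T.domain) :
    ‖⟪S z, (y : E)⟫_𝕜‖ ≤ ‖(z : F)‖ * ‖T y‖ :=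
  calc ‖⟪S z, (y : E)⟫_𝕜‖ = ‖⟪(z : F), T y⟫_𝕜‖ := by rw [h z y]
    _ ≤ ‖(z : F)‖ * ‖T y‖ := norm_inner_le_norm _ _

theorem exists_pos_norm_inner_le_of_mem_range {S : F →ₗ.[𝕜] E} {T : E →ₗ.[𝕜] F}
    (h : S.IsFormalAdjoint T) {v : E} (hv : v ∈ LinearMap.range S.toFun) :
    ∃ k : ℝ, 0 < k ∧ ∀ y : T.domain, ‖⟪v, (y : E)⟫_𝕜‖ ≤ k * ‖T y‖ := by
  obtain ⟨z, rfl⟩ := hv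
  refine ⟨‖(z : F)‖ + 1, by positivity, fun y => ?_⟩
  calc ‖⟪S z, (y : E)⟫_𝕜‖ ≤ ‖(z : F)‖ * ‖T y‖ := norm_inner_le_of_isFormalAdjoint h z y
    _ ≤ (‖(z : F)‖ + 1) * ‖T y‖ := by gcongr; exact le_add_of_nonneg_right zero_le_one

theorem stmt18_general {A B : E →ₗ.[𝕜] E} (h : B.IsFormalAdjoint A)
    (hrange : LinearMap.range A.toFun ≤ LinearMap.range B.toFun) :
    ∀ x : A.domain, ∃ k : ℝ, 0 < k ∧
      ∀ y : A.domain, ‖⟪A x, (y : E)⟫_𝕜‖ ≤ k * ‖A y‖ :=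
  fun x => exists_pos_norm_inner_le_of_mem_range h (hrange ⟨x, rfl⟩)

end FormalAdjoint

/-- Let `A` be a densely defined closed operator on a complex Hilbert
space `H` which is hypo-EP. Then for each `x ∈ D(A)` there exists a constant `k > 0`
such that `|⟪A x, y⟫| ≤ k * ‖A y‖` for all `y ∈ D(A)`. -/
theorem stmt18 (A : H →ₗ.[ℂ] H) (hd : Dense (A.domain : Set H)) (hc : A.IsClosed)
    (hr : IsClosed (A.ran : Set H)) (hhypo : A.ran ≤ A.adjoint.ran) :
    ∀ x : A.domain, ∃ k : ℝ, 0 < k ∧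
      ∀ y : A.domain, ‖⟪A x, (y : H)⟫_ℂ‖ ≤ k * ‖A y‖ :=
  stmt18_general (adjoint_isFormalAdjoint hd) hhypo
end
end

section
/- Let A be a densely defined closed operator on a complex Hilbert space H which is EP, let T be the Moore–Penrose inverse of A, and let B : H → H be a bounded linear operator such that ‖B‖·‖T‖ < 1, B(T(Ax)) = Bx for all x ∈ D(A), and A(T(By)) = By for all y ∈ H. Then the operator A + B, defined on D(A) by x ↦ Ax + Bx, is a densely defined closed operator which is EP: its range is closed and R(A + B) = R((A + B)*). -/
open scoped InnerProductSpace
open LinearPMap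

noncomputable section

variable {H : Type*} [NormedAddCommGroup H] [InnerProductSpace ℂ H] [CompleteSpace H]

/-- The perturbation `A + B` of a partially defined operator `A` by a bounded operator
`B`, defined on `D(A)` by `x ↦ A x + B x`. -/
def LinearPMap.addBounded (A : H →ₗ.[ℂ] H) (B : H →L[ℂ] H) : H →ₗ.[ℂ] H where
  domain := A.domain
  toFun := A.toFun + (B : H →ₗ[ℂ] H).comp A.domain.subtype

/-!
The hypothesis `B T A = B` turns the additive perturbation into a multiplicative one:
`A + B = (1 + B T) A`, where `1 + B T` is invertible by the Neumann series. Composing on the left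
with an invertible bounded operator `U` keeps `A` closed and does not change `R(A*)`, because
`(U A)* = A* U*` and `U*` is onto. On the other side `R(U A) = U R(A)`, and this is `R(A)` since
`U - 1 = B T` takes its values in `R(B) ⊆ R(A)`.
-/

theorem isUnit_one_add_of_norm_lt_one {R : Type*} [NormedRing R] [HasSummableGeomSeries R] {x : R}
    (hx : ‖x‖ < 1) : IsUnit (1 + x) := by
  simpa only [sub_neg_eq_add] using isUnit_one_sub_of_norm_lt_one ((norm_neg x).trans_lt hx)

section

variable {R M : Type*} [Ring R] [AddCommGroup M] [Module R M]

theorem map_eq_self_of_surjective_of_forall_sub_mem {f : M →ₗ[R] M} {V : Submodule R M}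
    (hf : Function.Surjective f) (hV : ∀ x, f x - x ∈ V) : V.map f = V := by
  refine le_antisymm (Submodule.map_le_iff_le_comap.2 fun x hx => ?_) fun y hy => ?_
  · exact (V.sub_mem_iff_left hx).1 (hV x)
  · obtain ⟨x, rfl⟩ := hf y
    exact Submodule.mem_map_of_mem ((V.sub_mem_iff_right hy).1 (hV x))

end

section

variable {R E F G : Type*} [CommRing R]
  [AddCommGroup E] [Module R E] [TopologicalSpace E]
  [AddCommGroup F] [Module R F] [TopologicalSpace F]
  [AddCommGroup G] [Module R G] [TopologicalSpace G]

theorem isClosed_compPMap (e : F ≃L[R] G) {A : E →ₗ.[R] F} (hA : A.IsClosed) :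
    ((e : F →ₗ[R] G).compPMap A).IsClosed := by
  have hgraph : (((e : F →ₗ[R] G).compPMap A).graph : Set (E × G)) =
      Prod.map id e.symm ⁻¹' (A.graph : Set (E × F)) := by
    ext ⟨x, y⟩
    simp only [SetLike.mem_coe, Set.mem_preimage, Prod.map_apply, id_eq, mem_graph_iff,
      ContinuousLinearEquiv.eq_symm_apply]
    rfl
  unfold LinearPMap.IsClosed
  rw [hgraph]
  exact hA.preimage (continuous_id.prodMap e.symm.continuous)

end

section

variable {𝕜 E F G : Type*} [RCLike 𝕜]
  [NormedAddCommGroup E] [InnerProductSpace 𝕜 E] [CompleteSpace E]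
  [NormedAddCommGroup F] [InnerProductSpace 𝕜 F] [CompleteSpace F]
  [NormedAddCommGroup G] [InnerProductSpace 𝕜 G] [CompleteSpace G]

theorem range_adjoint_compPMap_le (C : F →L[𝕜] G) {A : E →ₗ.[𝕜] F}
    (hA : Dense (A.domain : Set E)) :
    LinearMap.range ((C : F →ₗ[𝕜] G).compPMap A)†.toFun ≤ LinearMap.range A†.toFun := by
  rintro _ ⟨y, rfl⟩
  have hy : ∀ x : A.domain,
      ⟪((C : F →ₗ[𝕜] G).compPMap A)† y, (x : E)⟫_𝕜 = ⟪C.adjoint y, A x⟫_𝕜 := fun x =>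
    (adjoint_isFormalAdjoint (T := (C : F →ₗ[𝕜] G).compPMap A) hA y x).trans
      (C.adjoint_inner_left (A x) y).symm
  exact ⟨⟨C.adjoint y, mem_adjoint_domain_of_exists _ ⟨_, hy⟩⟩, adjoint_apply_eq hA _ hy⟩

theorem range_adjoint_compPMap_equiv (e : F ≃L[𝕜] G) {A : E →ₗ.[𝕜] F}
    (hA : Dense (A.domain : Set E)) :
    LinearMap.range ((e : F →ₗ[𝕜] G).compPMap A)†.toFun = LinearMap.range A†.toFun := by
  have hsymm : (e.symm : G →ₗ[𝕜] F).compPMap ((e : F →ₗ[𝕜] G).compPMap A) = A :=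
    LinearPMap.ext' (LinearMap.ext fun x => e.symm_apply_apply (A x))
  refine le_antisymm (range_adjoint_compPMap_le (e : F →L[𝕜] G) hA) ?_
  calc LinearMap.range A†.toFun
      = LinearMap.range
          ((e.symm : G →ₗ[𝕜] F).compPMap ((e : F →ₗ[𝕜] G).compPMap A))†.toFun := by rw [hsymm]
    _ ≤ LinearMap.range ((e : F →ₗ[𝕜] G).compPMap A)†.toFun :=
        range_adjoint_compPMap_le (e.symm : G →L[𝕜] F) hA

end

omit [CompleteSpace H] in
theorem ran_compPMap (f : H →ₗ[ℂ] H) (A : H →ₗ.[ℂ] H) : (f.compPMap A).ran = A.ran.map f :=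
  LinearMap.range_comp A.toFun f

omit [CompleteSpace H] in
theorem addBounded_eq_compPMap {A : H →ₗ.[ℂ] H} {B C : H →L[ℂ] H}
    (hCA : ∀ x : A.domain, C (A x) = B x) :
    A.addBounded B = ((1 + C : H →L[ℂ] H) : H →ₗ[ℂ] H).compPMap A :=
  LinearPMap.ext' (LinearMap.ext fun x => congrArg (A x + ·) (hCA x).symm)

theorem stmt19_general (A : H →ₗ.[ℂ] H) (hd : Dense (A.domain : Set H)) (hc : A.IsClosed)
    (hr : IsClosed (A.ran : Set H)) (hEP : A.ran = A.adjoint.ran)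
    (T B : H →L[ℂ] H) (hU : IsUnit (1 + B * T))
    (hBTA : ∀ x : A.domain, B (T (A x)) = B (x : H)) (hB : ∀ y : H, B y ∈ A.ran) :
    Dense ((A.addBounded B).domain : Set H) ∧ (A.addBounded B).IsClosed ∧
      IsClosed ((A.addBounded B).ran : Set H) ∧
      (A.addBounded B).ran = (A.addBounded B).adjoint.ran := by
  obtain ⟨u, hu⟩ := hU
  let e : H ≃L[ℂ] H := ContinuousLinearEquiv.ofUnit u
  have he : ∀ x, e x - x = B (T x) := fun x =>
    sub_eq_of_eq_add' (congrArg (fun f : H →L[ℂ] H => f x) hu)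
  have hadd : A.addBounded B = (e : H →ₗ[ℂ] H).compPMap A :=
    (addBounded_eq_compPMap (C := B * T) hBTA).trans (by rw [← hu]; rfl)
  have hran : (A.addBounded B).ran = A.ran := by
    rw [hadd, ran_compPMap]
    exact map_eq_self_of_surjective_of_forall_sub_mem e.surjective fun x => he x ▸ hB (T x)
  have hadj : (A.addBounded B).adjoint.ran = A.adjoint.ran :=
    hadd ▸ range_adjoint_compPMap_equiv e hd
  exact ⟨hd, hadd ▸ isClosed_compPMap e hc, hran ▸ hr, hran.trans (hEP.trans hadj.symm)⟩

/-- Let `A` be a densely defined closed operator on a complex Hilbert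
space `H` which is EP, let `T` be the Moore–Penrose inverse of `A`, and let
`B : H →L[ℂ] H` be a bounded operator with `‖B‖ * ‖T‖ < 1`, `B (T (A x)) = B x` for all
`x ∈ D(A)` and `A (T (B y)) = B y` for all `y ∈ H`. Then the operator `A + B`, defined
on `D(A)` by `x ↦ A x + B x`, is a densely defined closed operator which is EP: its
range is closed and `R(A + B) = R((A + B)*)`. -/
theorem stmt19 (A : H →ₗ.[ℂ] H) (hd : Dense (A.domain : Set H)) (hc : A.IsClosed)
    (hr : IsClosed (A.ran : Set H)) (hEP : A.ran = A.adjoint.ran)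
    (T : H →L[ℂ] H) (hT : IsMPInv A T)
    (B : H →L[ℂ] H) (hnorm : ‖B‖ * ‖T‖ < 1)
    (hBTA : ∀ x : A.domain, B (T (A x)) = B (x : H))
    (hATB : ∀ y : H, A ⟨T (B y), hT.1 (B y)⟩ = B y) :
    Dense ((A.addBounded B).domain : Set H) ∧ (A.addBounded B).IsClosed ∧
      IsClosed ((A.addBounded B).ran : Set H) ∧
      (A.addBounded B).ran = (A.addBounded B).adjoint.ran :=
  stmt19_general A hd hc hr hEP T B
    (isUnit_one_add_of_norm_lt_one ((norm_mul_le B T).trans_lt hnorm)) hBTA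
    fun y => ⟨_, hATB y⟩
end
end
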